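/- Let K be a field with char K ≠ ℓ containing a primitive ℓ-th root of unity, and T a subgroup of K^× with K^{×ℓ} ⊆ T and −1 ∈ T such that T ≠ 𝐇(T); set H = 𝐇(T). Fix a separable closure of K and let L be the subfield generated over K by all α with α^ℓ ∈ T. Assume there exists a subgroup T' ≤ L^× with L^{×ℓ} ⊆ T', T = K^× ∩ T', and H = K^× ∩ 𝐇(T') (where 𝐇(T') is computed in the field L). Then H is valuative and, denoting by v = v_H the coarsest valuation of K with O_v^× ⊆ H, one has 1+m_v ⊆ T, T·O_v^× = H, and the residue field k(v) has characteristic different from ℓ. -/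

import Mathlib

/-- A subgroup `T ≤ F^×` is rigid if for every `x ∈ F^× \ T` the
subgroup of `F^×/T` generated by the images of `x` and `1 - x` is cyclic. -/
def IsRigid {F : Type*} [Field F] (T : Subgroup Fˣ) : Prop :=
  ∀ x : Fˣ, x ∉ T → ∀ h : (1 : F) - (x : F) ≠ 0,
    IsCyclic ↥(Subgroup.closure {(QuotientGroup.mk x : Fˣ ⧸ T),
      QuotientGroup.mk (Units.mk0 ((1 : F) - (x : F)) h)})

/-- The subgroup `𝐇(T)`: the intersection of all subgroups `H ≤ F^×` such that (i) `T ≤ H`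
and `F^×/H` is cyclic, and (ii) for every `H'` with `T ≤ H'` and `F^×/H'` cyclic, `H ⊓ H'`
is rigid. -/
def Hbold {F : Type*} [Field F] (T : Subgroup Fˣ) : Subgroup Fˣ :=
  sInf {H : Subgroup Fˣ |
    (T ≤ H ∧ IsCyclic (Fˣ ⧸ H)) ∧
    ∀ H' : Subgroup Fˣ, T ≤ H' → IsCyclic (Fˣ ⧸ H') → IsRigid (H ⊓ H')}

/-- The subfield `L = K(√[ℓ]{T})` of a separable closure `Ω` of `K`, generated over `K` by
all `α` with `α^ℓ ∈ T`. -/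
noncomputable def Lfield {K : Type*} [Field K] (Ω : Type*) [Field Ω] [Algebra K Ω]
    (ℓ : ℕ) (T : Subgroup Kˣ) : IntermediateField K Ω :=
  IntermediateField.adjoin K {α : Ω | ∃ t ∈ T, algebraMap K Ω ((t : Kˣ) : K) = α ^ ℓ}

/-- The canonical map `K^× → L^×`. -/
noncomputable def unitsToL {K : Type*} [Field K] (Ω : Type*) [Field Ω] [Algebra K Ω]
    (ℓ : ℕ) (T : Subgroup Kˣ) : Kˣ →* (↥(Lfield Ω ℓ T))ˣ :=
  Units.map (algebraMap K ↥(Lfield Ω ℓ T)).toMonoidHom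

/-!
Let `T ≠ H = 𝐇(T)`. Every `x ∉ H` satisfies `1 - x ∈ T⟨x⟩`, and some `a, b ∈ H` with `a + b = 1`
are independent modulo `T`; comparing the two expressions `y - a = b - x`, for `x ∉ H` and
`x + y = 1`, improves this to `1 - x ∈ T ∪ xT`. The construction of Arason, Elman and Jacob then
produces from `T` and `H` the coarsest valuation ring `O` with `O^× ⊆ H`, and it satisfies
`1 + m ⊆ T`. If a subgroup `M` with cyclic quotient contains `T · O^×`, then all intersections
`M ∩ H'` occurring in the definition of `𝐇(T)` are rigid, so that `H ⊆ M`; since `T · O^×` is the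
intersection of all such `M`, it follows that `T · O^× = H`.

The same construction gives a valuation ring `W` of `L` for `T'`, and `W ∩ K ⊆ O`. Suppose that
`ℓ ∈ m`, and let `s` be a unit of `O` of `W`-value at least `1`. Then `1 + ℓs` lies in `T`, so it
is an `ℓ`-th power `(1 + b)^ℓ = 1 + b^ℓ + ℓbr` in `L`. Hence `ℓs(1 - br/s) = b^ℓ`, where `1 - br/s`
is a principal unit of `W`, and `ℓs ∈ T' ∩ K^× = T`. The case `s = 1` shows that `ℓ ∈ T`, so that
`s ∈ T`. As `s` or `s⁻¹` has `W`-value at least `1` for every unit `s` of `O`, this gives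
`O^× ⊆ T`, and therefore `H = T`.
-/

section RigidPair

variable {K Γ Δ : Type*} [Field K] [GroupWithZero Γ] [GroupWithZero Δ]

/-- The Arason–Elman–Jacob conditions on subgroups `T ≤ H` of `Kˣ` with `-1 ∈ T`: every `x ∉ H`
satisfies `1 + x ∈ T ∪ xT`, and `1 + h ∈ H` for `h ∈ H \ T`. The subgroups are encoded as the
kernels of homomorphisms `τ` and `η`, so `τ a = τ b` says that `a` and `b` are both zero or lie in
the same coset of `T`. -/
structure IsRigidPair (τ : K →*₀ Γ) (η : K →*₀ Δ) : Prop where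
  map_eq_one {a : K} : τ a = 1 → η a = 1
  map_neg_one : τ (-1) = 1
  map_one_add {x : K} : η x ≠ 1 → τ (1 + x) = 1 ∨ τ (1 + x) = τ x
  map_one_add_eq_one {h : K} : η h = 1 → τ h ≠ 1 → η (1 + h) = 1

/-- A rigid pair `T ≤ H` for which some `w ∈ H` is such that `1`, `w` and `1 + w` represent three
different cosets of `T`; this excludes the exceptional case of the theory. -/
structure IsNonexceptionalRigidPair (τ : K →*₀ Γ) (η : K →*₀ Δ) : Prop
    extends IsRigidPair τ η where
  exists_map_ne : ∃ w, η w = 1 ∧ τ w ≠ 1 ∧ τ (1 + w) ≠ 1 ∧ τ (1 + w) ≠ τ w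

/-- The set `𝒪⁻(T, H) = {y ∉ H | 1 + y ∈ T}` for `T` and `H` the kernels of `τ` and `η`. It contains
`0`, since `η 0 ≠ 1`. -/
def oMinus (τ : K →*₀ Γ) (η : K →*₀ Δ) : Set K := {y | η y ≠ 1 ∧ τ (1 + y) = 1}

lemma zero_mem_oMinus (τ : K →*₀ Γ) (η : K →*₀ Δ) : 0 ∈ oMinus τ η := by simp [oMinus]

/-- The monoid `𝒪⁺(T, H)` of all `h ∈ H` with `h 𝒪⁻ ⊆ 𝒪⁻`, for `T` and `H` the kernels of `τ`
and `η`. -/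
def oPlus (τ : K →*₀ Γ) (η : K →*₀ Δ) : Submonoid K where
  carrier := {h | η h = 1 ∧ ∀ y ∈ oMinus τ η, h * y ∈ oMinus τ η}
  one_mem' := by simp
  mul_mem' ha hb := ⟨by rw [map_mul, ha.1, hb.1, mul_one], fun y hy => by
    rw [mul_assoc]; exact ha.2 _ (hb.2 y hy)⟩

/-- The set `𝒪⁻ ∪ 𝒪⁺`, which is a valuation ring for nonexceptional rigid pairs. -/
def oSet (τ : K →*₀ Γ) (η : K →*₀ Δ) : Set K := oMinus τ η ∪ oPlus τ η

variable {τ : K →*₀ Γ} {η : K →*₀ Δ}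

namespace IsRigidPair

variable (c : IsRigidPair τ η) {a b h : K}

include c

lemma map_eq_of_map_eq (hab : τ a = τ b) : η a = η b := by
  rcases eq_or_ne b 0 with rfl | hb
  · rw [map_zero, map_eq_zero] at hab
    rw [hab]
  · have : η (a / b) = 1 := c.map_eq_one (by
      rw [map_div₀, hab, div_self ((map_ne_zero τ).2 hb)])
    rwa [map_div₀, div_eq_one_iff_eq ((map_ne_zero η).2 hb)] at this

lemma map_neg (a : K) : τ (-a) = τ a := by
  rw [← neg_one_mul, map_mul, c.map_neg_one, one_mul]

lemma map_add_of_map_ne (hab : η a ≠ η b) : τ (a + b) = τ a ∨ τ (a + b) = τ b := by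
  rcases eq_or_ne a 0 with rfl | ha
  · simp
  have hba : η (b / a) ≠ 1 := by
    rwa [map_div₀, Ne, div_eq_one_iff_eq ((map_ne_zero η).2 ha), eq_comm]
  have hsum : a + b = a * (1 + b / a) := by field_simp
  rw [hsum, map_mul]
  refine (c.map_one_add hba).imp (fun h1 => by rw [h1, mul_one]) fun h1 => ?_
  rw [h1, ← map_mul, mul_div_cancel₀ _ ha]

lemma map_add_eq_of_map_ne (hη : η a = η b) (hτ : τ a ≠ τ b) : η (a + b) = η a := by
  have ha : a ≠ 0 := by
    rintro rfl
    rw [map_zero, eq_comm, map_eq_zero] at hη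
    exact hτ (by rw [hη])
  have hη' : η (b / a) = 1 := by rw [map_div₀, ← hη, div_self ((map_ne_zero η).2 ha)]
  have hτ' : τ (b / a) ≠ 1 := by
    rwa [map_div₀, Ne, div_eq_one_iff_eq ((map_ne_zero τ).2 ha), eq_comm]
  have hsum : a + b = a * (1 + b / a) := by field_simp
  rw [hsum, map_mul, c.map_one_add_eq_one hη' hτ', mul_one]

lemma mem_oMinus_or_inv_mem (ha : η a ≠ 1) : a ∈ oMinus τ η ∨ a⁻¹ ∈ oMinus τ η := by
  rcases eq_or_ne a 0 with rfl | ha0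
  · exact .inl ⟨ha, by simp⟩
  refine (c.map_one_add ha).imp (fun h1 => ⟨ha, h1⟩) fun h1 => ⟨by simpa using ha, ?_⟩
  have hinv : 1 + a⁻¹ = (1 + a) / a := by field_simp; ring
  rw [hinv, map_div₀, h1, div_self ((map_ne_zero τ).2 ha0)]

lemma inv_notMem_oMinus (ha : a ∈ oMinus τ η) (ha0 : a ≠ 0) : a⁻¹ ∉ oMinus τ η := by
  intro ha'
  have h1 : τ (a * (1 + a⁻¹)) = 1 := by
    rw [mul_add, mul_inv_cancel₀ ha0, mul_one, add_comm, ha.2]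
  rw [map_mul, ha'.2, mul_one] at h1
  exact ha.1 (c.map_eq_one h1)

lemma mem_oPlus_of_map_one_add_ne (hη : η h = 1) (hτ : τ h ≠ 1) (hh : τ (1 + h) ≠ τ h) :
    h ∈ oPlus τ η := by
  refine ⟨hη, fun y hy => ?_⟩
  have hhy : η (h * y) = η y := by rw [map_mul, hη, one_mul]
  refine ⟨hhy ▸ hy.1, ?_⟩
  by_contra hne
  have hhy' : τ (1 + h * y) = τ (h * y) := (c.map_one_add (hhy ▸ hy.1)).resolve_left hne
  have hy0 : τ y ≠ 0 := (map_ne_zero τ).2 fun hy0 => hne (by simp [hy0])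
  have hs : η (1 + h * y + y) = η y := by
    rw [c.map_add_eq_of_map_ne _ _, c.map_eq_of_map_eq hhy', hhy]
    · rw [c.map_eq_of_map_eq hhy', hhy]
    · rwa [hhy', map_mul, Ne, mul_eq_right₀ hy0]
  have hs1 : τ (1 + h * y + y) ≠ 1 := fun h1 => hy.1 (hs ▸ c.map_eq_one h1)
  have hs2 : τ (1 + h * y + y) = τ (h * y) := by
    have hη' : η (1 + y) ≠ η (h * y) := by
      rw [c.map_eq_one hy.2, hhy]; exact hy.1.symm
    have := c.map_add_of_map_ne hη'
    rw [hy.2, add_right_comm] at this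
    exact this.resolve_left hs1
  have hs3 : τ (1 + h * y + y) = τ ((1 + h) * y) := by
    have hη' : η ((1 + h) * y) ≠ 1 := by
      rw [map_mul, c.map_one_add_eq_one hη hτ, one_mul]; exact hy.1
    have := c.map_one_add hη'
    rw [show 1 + (1 + h) * y = 1 + h * y + y by ring] at this
    exact this.resolve_left hs1
  rw [hs2, map_mul, map_mul] at hs3
  exact hh (mul_right_cancel₀ hy0 hs3).symm

lemma inv_mem_oPlus_of_map_one_add_ne (hη : η h = 1) (hτ : τ h ≠ 1) (hh : τ (1 + h) ≠ 1) :
    h⁻¹ ∈ oPlus τ η := by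
  have h0 : τ h ≠ 0 := (map_ne_zero τ).2 (by rintro rfl; simp at hη)
  refine c.mem_oPlus_of_map_one_add_ne (by simpa using hη) (by simpa using hτ) fun h1 => hh ?_
  have hinv : 1 + h = h * (1 + h⁻¹) := by
    field_simp [(map_ne_zero τ).1 h0]; ring
  rw [hinv, map_mul, h1, map_inv₀, mul_inv_cancel₀ h0]

lemma mem_oPlus_or_inv_mem_of_map_ne (hη : η h = 1) (hτ : τ h ≠ 1) :
    h ∈ oPlus τ η ∨ h⁻¹ ∈ oPlus τ η := by
  rcases eq_or_ne (τ (1 + h)) 1 with h1 | h1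
  · exact .inl (c.mem_oPlus_of_map_one_add_ne hη hτ (h1 ▸ hτ.symm))
  · exact .inr (c.inv_mem_oPlus_of_map_one_add_ne hη hτ h1)

end IsRigidPair

namespace IsNonexceptionalRigidPair

variable (c : IsNonexceptionalRigidPair τ η) {a b : K}

include c

lemma mem_oPlus_or_inv_mem (ha : η a = 1) : a ∈ oPlus τ η ∨ a⁻¹ ∈ oPlus τ η := by
  by_cases hτ : τ a = 1
  swap
  · exact c.mem_oPlus_or_inv_mem_of_map_ne ha hτ
  obtain ⟨w, hη, hw, hw1, hww⟩ := c.exists_map_ne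
  have hw0 : w ≠ 0 := by rintro rfl; simp at hη
  have haw : η (a * w) = 1 := by rw [map_mul, ha, hη, one_mul]
  have haw' : τ (a * w) ≠ 1 := by rwa [map_mul, hτ, one_mul]
  refine (c.mem_oPlus_or_inv_mem_of_map_ne haw haw').imp (fun h => ?_) fun h => ?_
  · simpa [hw0] using mul_mem h (c.inv_mem_oPlus_of_map_one_add_ne hη hw hw1)
  · simpa [hw0] using mul_mem (c.mem_oPlus_of_map_one_add_ne hη hw hww) h

lemma neg_one_mem_oPlus : -1 ∈ oPlus τ η := by
  simpa [inv_neg] using c.mem_oPlus_or_inv_mem (c.map_eq_one c.map_neg_one)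

lemma exists_oPlus_units : ∃ w, τ w ≠ 1 ∧ τ (1 + w) ≠ 1 ∧ τ (1 + w) ≠ τ w ∧
    (w ∈ oPlus τ η ∧ w⁻¹ ∈ oPlus τ η) ∧ 1 + w ∈ oPlus τ η ∧ (1 + w)⁻¹ ∈ oPlus τ η := by
  obtain ⟨w, hη, hw, hw1, hww⟩ := c.exists_map_ne
  refine ⟨w, hw, hw1, hww, ⟨c.mem_oPlus_of_map_one_add_ne hη hw hww,
    c.inv_mem_oPlus_of_map_one_add_ne hη hw hw1⟩, ?_⟩
  have hη' : η (-(1 + w)) = 1 := by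
    rw [c.map_eq_of_map_eq (c.map_neg _), c.map_one_add_eq_one hη hw]
  have hτ' : τ (-(1 + w)) ≠ 1 := by rwa [c.map_neg]
  have hsum : τ (1 + -(1 + w)) = τ w := by rw [← c.map_neg w]; ring_nf
  constructor
  · simpa using mul_mem c.neg_one_mem_oPlus (c.mem_oPlus_of_map_one_add_ne hη' hτ' (by
      rw [hsum, c.map_neg]; exact hww.symm))
  · rw [← neg_neg (1 + w), inv_neg, ← neg_one_mul]
    exact mul_mem c.neg_one_mem_oPlus
      (c.inv_mem_oPlus_of_map_one_add_ne hη' hτ' (by rwa [hsum]))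

lemma mul_mem_oSet_of_mem_oMinus (ha : a ∈ oMinus τ η) (hb : b ∈ oMinus τ η) :
    a * b ∈ oSet τ η := by
  by_cases hab : η (a * b) = 1
  · have ha0 : a ≠ 0 := by rintro rfl; simp at hab
    have hb0 : b ≠ 0 := by rintro rfl; simp at hab
    refine .inr ((c.mem_oPlus_or_inv_mem hab).resolve_right fun h => ?_)
    have hinv : (a * b)⁻¹ * b = a⁻¹ := by field_simp
    exact c.inv_notMem_oMinus ha ha0 (hinv ▸ h.2 b hb)
  refine .inl ⟨hab, ?_⟩
  by_contra hne
  have ha0 : η a ≠ 0 := (map_ne_zero η).2 (by rintro rfl; simp at hne)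
  have hab' := (c.map_one_add hab).resolve_left hne
  have hfact : τ (a * (1 + b)) = τ a := by rw [map_mul, hb.2, mul_one]
  -- The sum `1 + a + ab` lies in two of the cosets `T`, `aT`, `abT` for each way of bracketing it.
  have hs1 := c.map_add_of_map_ne (a := 1 + a) (b := a * b) (by
    rw [c.map_eq_one ha.2]; exact Ne.symm hab)
  have hs2 := c.map_one_add (x := a * (1 + b)) (by
    rw [c.map_eq_of_map_eq hfact]; exact ha.1)
  have hs3 := c.map_add_of_map_ne (a := 1 + a * b) (b := a) (by
    rw [c.map_eq_of_map_eq hab', map_mul, Ne, mul_eq_left₀ ha0]; exact hb.1)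
  rw [ha.2] at hs1
  rw [show 1 + a * (1 + b) = 1 + a + a * b by ring, hfact] at hs2
  rw [add_right_comm, hab'] at hs3
  have h1 : τ a ≠ 1 := fun h => ha.1 (c.map_eq_one h)
  have h2 : τ (a * b) ≠ 1 := fun h => hab (c.map_eq_one h)
  have h3 : τ (a * b) ≠ τ a := by
    rw [map_mul, Ne, mul_eq_left₀ ((map_ne_zero τ).2 ((map_ne_zero η).1 ha0))]
    exact fun h => hb.1 (c.map_eq_one h)
  grind

lemma mul_mem_oSet (ha : a ∈ oSet τ η) (hb : b ∈ oSet τ η) : a * b ∈ oSet τ η := by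
  rcases ha with ha | ha <;> rcases hb with hb | hb
  · exact c.mul_mem_oSet_of_mem_oMinus ha hb
  · exact .inl (mul_comm a b ▸ hb.2 a ha)
  · exact .inl (ha.2 b hb)
  · exact .inr (mul_mem ha hb)

lemma mem_oSet_or_inv_mem (a : K) : a ∈ oSet τ η ∨ a⁻¹ ∈ oSet τ η := by
  by_cases ha : η a = 1
  · exact (c.mem_oPlus_or_inv_mem ha).imp .inr .inr
  · exact (c.mem_oMinus_or_inv_mem ha).imp .inl .inl

lemma neg_mem_oSet (ha : a ∈ oSet τ η) : -a ∈ oSet τ η := by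
  simpa using c.mul_mem_oSet (.inr c.neg_one_mem_oPlus) ha

lemma one_add_mem_oPlus (ha : a ∈ oMinus τ η) : 1 + a ∈ oPlus τ η := by
  obtain ⟨w, hw, -, hww, ⟨hwO, hwO'⟩, -, hwO1⟩ := c.exists_oPlus_units
  have hw0 : w ≠ 0 := by rintro rfl; simpa using hwO.1
  have hw1 : 1 + w ≠ 0 := fun h => by simpa [h] using hwO1.1
  have hτ : τ (w * (1 + a)) = τ w := by rw [map_mul, ha.2, mul_one]
  have hsum : 1 + w * (1 + a) = (1 + w) * (1 + (1 + w)⁻¹ * (w * a)) := by field_simp; ring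
  have hmem : w * (1 + a) ∈ oPlus τ η := by
    refine c.mem_oPlus_of_map_one_add_ne ?_ (hτ ▸ hw) ?_
    · rw [c.map_eq_of_map_eq hτ, hwO.1]
    · rwa [hτ, hsum, map_mul, (hwO1.2 _ (hwO.2 _ ha)).2, mul_one]
  simpa [hw0] using mul_mem hwO' hmem

lemma one_add_mem_oSet_of_mem_oPlus (ha : a ∈ oPlus τ η) (hne : ¬ (τ a = 1 ∧ τ (1 + a) = 1)) :
    1 + a ∈ oSet τ η := by
  rcases eq_or_ne (1 + a) 0 with h0 | h0
  · exact .inl (h0 ▸ zero_mem_oMinus τ η)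
  by_cases h : η (1 + a) = 1
  · refine .inr ⟨h, fun y hy => ?_⟩
    have hay := ha.2 y hy
    have hη : η ((1 + a) * y) = η y := by rw [map_mul, h, one_mul]
    refine ⟨hη ▸ hy.1, by_contra fun hne1 => hne ?_⟩
    have hs := (c.map_one_add (hη ▸ hy.1)).resolve_left hne1
    have hy0 : τ y ≠ 0 := (map_ne_zero τ).2 (by rintro rfl; simp at hne1)
    rw [show 1 + (1 + a) * y = 1 + y + a * y by ring] at hs hne1
    have hs1 := c.map_add_of_map_ne (a := 1 + y) (b := a * y) (by
      rw [c.map_eq_one hy.2]; exact hay.1.symm)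
    have hs2 := c.map_add_of_map_ne (a := 1 + a * y) (b := y) (by
      rw [c.map_eq_one hay.2]; exact hy.1.symm)
    rw [hy.2] at hs1
    rw [add_right_comm, hay.2] at hs2
    have hs1 := hs1.resolve_left hne1
    have hs2 := hs2.resolve_left hne1
    rw [hs2, map_mul, eq_comm, mul_eq_right₀ hy0] at hs hs1
    exact ⟨hs1, hs⟩
  · refine .inl ((c.mem_oMinus_or_inv_mem h).resolve_right fun hinv => ?_)
    have hmem := (mul_mem c.neg_one_mem_oPlus ha).2 _ hinv
    have hsum : 1 + -1 * a * (1 + a)⁻¹ = (1 + a)⁻¹ := by field_simp; ring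
    exact hinv.1 (c.map_eq_one (hsum ▸ hmem.2))

lemma one_add_mem_oSet (ha : a ∈ oSet τ η) : 1 + a ∈ oSet τ η := by
  rcases ha with ha | ha
  · exact .inr (c.one_add_mem_oPlus ha)
  by_cases hne : τ a = 1 ∧ τ (1 + a) = 1
  swap
  · exact c.one_add_mem_oSet_of_mem_oPlus ha hne
  obtain ⟨w, hw, hw1, -, ⟨hwO, hwO'⟩, hwO1, hwO1'⟩ := c.exists_oPlus_units
  have hw0 : w ≠ 0 := by rintro rfl; simpa using hwO.1
  have hw10 : 1 + w ≠ 0 := fun h => by simpa [h] using hwO1.1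
  have hneg : ∀ {b}, b ∈ oPlus τ η → -b ∈ oPlus τ η := fun hb => by
    simpa using mul_mem c.neg_one_mem_oPlus hb
  -- `1 + a = (a - w) + (1 + w)`, and neither of these two sums is of the critical kind.
  have hdiff : a - w ∈ oSet τ η := by
    have hmem := c.one_add_mem_oSet_of_mem_oPlus (hneg (mul_mem ha hwO')) fun h => hw (by
      simpa [c.map_neg, hne.1] using h.1)
    have hsum : a - w = -w * (1 + -(a * w⁻¹)) := by field_simp; ring
    exact hsum ▸ c.mul_mem_oSet (.inr (hneg hwO)) hmem
  have hsum : 1 + a = (1 + w) * (1 + (1 + w)⁻¹ * (a - w)) := by field_simp; ring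
  have hτ : τ (1 + (1 + w)⁻¹ * (a - w)) ≠ 1 := fun h => hw1 (by
    rw [← hne.2, hsum, map_mul, h, mul_one])
  rw [hsum]
  refine c.mul_mem_oSet (.inr hwO1) ?_
  rcases c.mul_mem_oSet (.inr hwO1') hdiff with hq | hq
  · exact absurd hq.2 hτ
  · exact c.one_add_mem_oSet_of_mem_oPlus hq fun h => hτ h.2

lemma add_mem_oSet (ha : a ∈ oSet τ η) (hb : b ∈ oSet τ η) : a + b ∈ oSet τ η := by
  rcases eq_or_ne a 0 with rfl | ha0
  · simpa using hb
  rcases eq_or_ne b 0 with rfl | hb0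
  · simpa using ha
  rcases c.mem_oSet_or_inv_mem (a / b) with h | h
  · have hsum : a + b = b * (1 + a / b) := by field_simp; ring
    exact hsum ▸ c.mul_mem_oSet hb (c.one_add_mem_oSet h)
  · have hsum : a + b = a * (1 + (a / b)⁻¹) := by field_simp
    exact hsum ▸ c.mul_mem_oSet ha (c.one_add_mem_oSet h)

/-- The valuation ring `𝒪⁻ ∪ 𝒪⁺` of a nonexceptional rigid pair. -/
def valuationSubring : ValuationSubring K where
  carrier := oSet τ η
  mul_mem' := c.mul_mem_oSet
  one_mem' := .inr (one_mem _)
  add_mem' := c.add_mem_oSet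
  zero_mem' := .inl (zero_mem_oMinus τ η)
  neg_mem' := c.neg_mem_oSet
  mem_or_inv_mem' := c.mem_oSet_or_inv_mem

lemma map_eq_one_of_valuation_eq_one (ha : c.valuationSubring.valuation a = 1) : η a = 1 := by
  have ha0 : a ≠ 0 := by rintro rfl; simp at ha
  have haO : a ∈ oSet τ η := (c.valuationSubring.valuation_le_one_iff a).1 ha.le
  have haO' : a⁻¹ ∈ oSet τ η :=
    (c.valuationSubring.valuation_le_one_iff a⁻¹).1 (by rw [map_inv₀, ha, inv_one])
  rcases haO with h | h
  · rcases haO' with h' | h'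
    · exact absurd h' (c.inv_notMem_oMinus h ha0)
    · simpa using h'.1
  · exact h.1

lemma map_one_add_of_valuation_lt_one_of_map_ne (ha : c.valuationSubring.valuation a < 1)
    (hτ : τ a ≠ 1) : τ (1 + a) = 1 := by
  rcases (c.valuationSubring.valuation_le_one_iff a).1 ha.le with h | h
  · exact h.2
  by_contra hne
  have hinv := (c.valuationSubring.valuation_le_one_iff a⁻¹).2
    (.inr (c.inv_mem_oPlus_of_map_one_add_ne h.1 hτ hne))
  have ha0 : a ≠ 0 := by rintro rfl; simpa using h.1
  exact hinv.not_gt ((c.valuationSubring.valuation.val_lt_one_iff ha0).1 ha)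

lemma map_one_add_of_valuation_lt_one (ha : c.valuationSubring.valuation a < 1) :
    τ (1 + a) = 1 := by
  set v := c.valuationSubring.valuation with hv
  by_cases hτ : τ a = 1
  swap
  · exact c.map_one_add_of_valuation_lt_one_of_map_ne ha hτ
  obtain ⟨w, hw, hw1, -, ⟨hwO, -⟩, hwO1, -⟩ := c.exists_oPlus_units
  have hvO : ∀ {b}, b ∈ oPlus τ η → v b ≤ 1 := fun hb =>
    (c.valuationSubring.valuation_le_one_iff _).2 (.inr hb)
  have hvaw : v (-(a * w)) < 1 := by
    rw [Valuation.map_neg, map_mul]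
    exact mul_lt_one_of_lt_of_le ha (hvO hwO)
  have hτaw : τ (1 + -(a * w)) = 1 :=
    c.map_one_add_of_valuation_lt_one_of_map_ne hvaw (by rwa [c.map_neg, map_mul, hτ, one_mul])
  have hquot : τ (1 + a * (1 + w) / (1 + -(a * w))) = 1 := by
    apply c.map_one_add_of_valuation_lt_one_of_map_ne
    · rw [← hv, map_div₀, v.map_one_add_of_lt hvaw, div_one, map_mul]
      exact mul_lt_one_of_lt_of_le ha (hvO hwO1)
    · rwa [map_div₀, hτaw, div_one, map_mul, hτ, one_mul]
  have h0 : 1 + -(a * w) ≠ 0 := fun h => by simp [h] at hτaw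
  have hfact : 1 + a = (1 + -(a * w)) * (1 + a * (1 + w) / (1 + -(a * w))) := by
    rw [mul_add, mul_div_cancel₀ _ h0]; ring
  rw [hfact, map_mul, hτaw, hquot, one_mul]

end IsNonexceptionalRigidPair

lemma IsRigidPair.mem_oMinus_of_mem (c : IsRigidPair τ η) {O : ValuationSubring K}
    (hO : ∀ a, O.valuation a = 1 → η a = 1) {y : K} (hy : y ∈ O) (hη : η y ≠ 1) :
    y ∈ oMinus τ η := by
  have hlt : O.valuation y < 1 :=
    ((O.valuation_le_one_iff y).2 hy).lt_of_ne fun h => hη (hO y h)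
  have h1 : η (1 + y) = 1 := hO _ (O.valuation.map_one_add_of_lt hlt)
  exact ⟨hη, (c.map_one_add hη).resolve_right fun h => hη (c.map_eq_of_map_eq h ▸ h1)⟩

lemma IsNonexceptionalRigidPair.le_valuationSubring (c : IsNonexceptionalRigidPair τ η)
    {O : ValuationSubring K} (hO : ∀ a, O.valuation a = 1 → η a = 1) : O ≤ c.valuationSubring := by
  intro z hz
  by_cases hη : η z = 1
  swap
  · exact .inl (c.mem_oMinus_of_mem hO hz hη)
  refine .inr ⟨hη, fun y hy => ?_⟩
  rcases eq_or_ne y 0 with rfl | hy0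
  · simpa using hy
  have hyO : y ∈ O := (O.mem_or_inv_mem y).resolve_right fun h =>
    c.inv_notMem_oMinus hy hy0 (c.mem_oMinus_of_mem hO h (by simpa using hy.1))
  exact c.mem_oMinus_of_mem hO (mul_mem hz hyO) (by rw [map_mul, hη, one_mul]; exact hy.1)

end RigidPair

section PrimeExponent

open Subgroup

lemma mk_mem_zpowers_mk_iff {G : Type*} [CommGroup G] {N : Subgroup G} {x y : G} :
    (y : G ⧸ N) ∈ zpowers (x : G ⧸ N) ↔ y ∈ N ⊔ zpowers x := by
  rw [← QuotientGroup.comap_map_mk', MonoidHom.map_zpowers]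
  rfl

lemma mk_mem_map_mk'_iff {G : Type*} [CommGroup G] {N S : Subgroup G} (hS : N ≤ S) {x : G} :
    (x : G ⧸ N) ∈ S.map (QuotientGroup.mk' N) ↔ x ∈ S := by
  rw [← QuotientGroup.coe_mk', ← mem_comap, QuotientGroup.comap_map_mk', sup_eq_right.2 hS]

variable {G : Type*} [CommGroup G] {ℓ : ℕ} [Fact ℓ.Prime] {N : Subgroup G} {x y : G}

lemma zpow_eq_one_iff_dvd (hpow : x ^ ℓ = 1) (hx : x ≠ 1) {n : ℤ} : x ^ n = 1 ↔ (ℓ : ℤ) ∣ n := by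
  rw [← orderOf_dvd_iff_zpow_eq_one, orderOf_eq_prime hpow hx]

lemma zpow_mem_iff_dvd (hpow : x ^ ℓ ∈ N) (hx : x ∉ N) {n : ℤ} : x ^ n ∈ N ↔ (ℓ : ℤ) ∣ n := by
  simp only [← QuotientGroup.eq_one_iff, QuotientGroup.mk_pow, QuotientGroup.mk_zpow] at hpow hx ⊢
  exact zpow_eq_one_iff_dvd hpow hx

lemma sup_zpowers_eq_of_mem (hpow : x ^ ℓ ∈ N) (hy : y ∉ N) (h : y ∈ N ⊔ zpowers x) :
    N ⊔ zpowers y = N ⊔ zpowers x := by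
  refine le_antisymm (sup_le le_sup_left (by rwa [zpowers_le])) (sup_le le_sup_left ?_)
  obtain ⟨n, hn, z, hz, rfl⟩ := mem_sup.1 h
  obtain ⟨k, rfl⟩ := mem_zpowers_iff.1 hz
  have hk : ¬ (ℓ : ℤ) ∣ k := fun hk => hy (mul_mem hn (by
    obtain ⟨m, rfl⟩ := hk
    simpa [zpow_mul] using zpow_mem hpow m))
  obtain ⟨u, v, huv⟩ :=
    (Nat.prime_iff_prime_int.1 Fact.out).irreducible.coprime_iff_not_dvd.2 hk
  have hxk : x ^ k ∈ N ⊔ zpowers (n * x ^ k) := by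
    simpa using mul_mem_sup (inv_mem hn) (mem_zpowers (n * x ^ k))
  have hx : (x ^ ℓ) ^ u * (x ^ k) ^ v = x := by
    rw [← zpow_natCast, ← zpow_mul, ← zpow_mul, ← zpow_add, mul_comm _ u, mul_comm k, huv, zpow_one]
  simpa only [hx, zpowers_le] using mul_mem (zpow_mem (mem_sup_left hpow) u) (zpow_mem hxk v)

lemma isCyclic_closure_mk_pair_iff (hN : ∀ g : G, g ^ ℓ ∈ N) (hx : x ∉ N) :
    IsCyclic (closure {(x : G ⧸ N), (y : G ⧸ N)}) ↔ y ∈ N ⊔ zpowers x := by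
  constructor
  · intro h
    obtain ⟨g, hg⟩ := (Subgroup.isCyclic_iff_exists_zpowers_eq_top _).1 h
    obtain ⟨g, rfl⟩ := QuotientGroup.mk_surjective g
    have hle : ∀ z ∈ ({(x : G ⧸ N), (y : G ⧸ N)} : Set (G ⧸ N)), z ∈ zpowers (g : G ⧸ N) :=
      fun z hz => hg ▸ subset_closure hz
    rw [sup_zpowers_eq_of_mem (hN g) hx (mk_mem_zpowers_mk_iff.1 (hle x (by simp)))]
    exact mk_mem_zpowers_mk_iff.1 (hle y (by simp))
  · intro h
    refine isCyclic_of_le (H' := zpowers (x : G ⧸ N)) ((closure_le _).2 ?_)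
    rintro _ (rfl | rfl)
    exacts [mem_zpowers _, mk_mem_zpowers_mk_iff.2 h]

lemma sup_zpowers_eq_top [IsCyclic (G ⧸ N)] (hN : ∀ g : G, g ^ ℓ ∈ N) (hx : x ∉ N) :
    N ⊔ zpowers x = ⊤ := by
  obtain ⟨g, hg⟩ := IsCyclic.exists_generator (α := G ⧸ N)
  obtain ⟨g, rfl⟩ := QuotientGroup.mk_surjective g
  have htop : ∀ y, y ∈ N ⊔ zpowers g := fun y => mk_mem_zpowers_mk_iff.1 (hg y)
  rw [sup_zpowers_eq_of_mem (hN g) hx (htop x), eq_top_iff']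
  exact htop

lemma exists_le_notMem_isCyclic (hN : ∀ g : G, g ^ ℓ ∈ N) (hy : y ∉ N) :
    ∃ M, N ≤ M ∧ y ∉ M ∧ IsCyclic (G ⧸ M) := by
  obtain ⟨M, hNM, hM⟩ := zorn_le_nonempty₀ {M : Subgroup G | y ∉ M} (by
    refine fun c hc hchain M hMc => ⟨sSup c, fun h => ?_, fun _ => le_sSup⟩
    obtain ⟨M', hM'c, hM'⟩ := (mem_sSup_of_directedOn ⟨M, hMc⟩ hchain.directedOn).1 h
    exact hc hM'c hM') N hy
  refine ⟨M, hNM, hM.prop, ⟨(y : G ⧸ M), fun z => ?_⟩⟩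
  obtain ⟨z, rfl⟩ := QuotientGroup.mk_surjective z
  refine mk_mem_zpowers_mk_iff.2 ?_
  by_cases hz : z ∈ M
  · exact mem_sup_left hz
  have hyz : y ∈ M ⊔ zpowers z := by
    by_contra h
    exact hz (hM.le_of_ge h le_sup_left (mem_sup_right (mem_zpowers z)))
  rw [sup_zpowers_eq_of_mem (hNM (hN z)) hM.prop hyz]
  exact mem_sup_right (mem_zpowers z)

lemma eq_of_div_mem_zpowers (hG : ∀ g : G, g ^ ℓ = 1) {S : Subgroup G} {a b s : G} (hx : x ∉ S)
    (ha : a ∈ S) (hb : b ∈ S) (ha1 : a ≠ 1) (hab : b ∉ zpowers a) (hy : y ∈ zpowers x)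
    (hsa : s / a ∈ zpowers (y / a)) (hsb : s / b ∈ zpowers (x / b)) : y = x := by
  obtain ⟨k, rfl⟩ := mem_zpowers_iff.1 hy
  obtain ⟨i, hi⟩ := mem_zpowers_iff.1 hsa
  obtain ⟨j, hj⟩ := mem_zpowers_iff.1 hsb
  have hx1 : x ≠ 1 := fun h => hx (h ▸ one_mem S)
  have hb1 : b ≠ 1 := fun h => hab (h ▸ one_mem _)
  have hxi : x ^ (k * i) = s / a * a ^ i := by rw [← hi, div_zpow, div_mul_cancel, zpow_mul]
  have hxj : x ^ j = s / b * b ^ j := by rw [← hj, div_zpow, div_mul_cancel]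
  have hrel : x ^ (k * i - j) = b ^ (1 - j) / a ^ (1 - i) := by
    rw [zpow_sub, ← div_eq_mul_inv, hxi, hxj, mul_div_mul_comm, div_div_div_cancel_left,
      div_mul_div_comm, zpow_sub b, zpow_sub a, zpow_one, zpow_one,
      ← div_eq_mul_inv, ← div_eq_mul_inv, div_div_div_eq, mul_comm a]
  have hkij : (ℓ : ℤ) ∣ k * i - j := (zpow_mem_iff_dvd (hG x ▸ one_mem S) hx).1
    (hrel ▸ div_mem (zpow_mem hb _) (zpow_mem ha _))
  rw [(zpow_eq_one_iff_dvd (hG x) hx1).2 hkij, eq_comm, div_eq_one] at hrel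
  have hj1 : (ℓ : ℤ) ∣ 1 - j := (zpow_mem_iff_dvd (hG b ▸ one_mem _) hab).1 (hrel ▸ ⟨_, rfl⟩)
  have hi1 : (ℓ : ℤ) ∣ 1 - i := by
    rwa [(zpow_eq_one_iff_dvd (hG b) hb1).2 hj1, eq_comm, zpow_eq_one_iff_dvd (hG a) ha1] at hrel
  have hk : (ℓ : ℤ) ∣ k - 1 := by
    have hsum : k - 1 = k * i - j + k * (1 - i) - (1 - j) := by ring
    exact hsum ▸ dvd_sub (dvd_add hkij (hi1.mul_left k)) hj1
  rwa [← zpow_eq_one_iff_dvd (hG x) hx1, zpow_sub, zpow_one, ← div_eq_mul_inv, div_eq_one] at hk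

lemma div_mem_of_div_mem_sup_zpowers (hN : ∀ g : G, g ^ ℓ ∈ N) {S : Subgroup G} (hS : N ≤ S)
    {a b s : G} (hx : x ∉ S) (ha : a ∈ S) (hb : b ∈ S) (haN : a ∉ N) (hab : b ∉ N ⊔ zpowers a)
    (hy : y ∈ N ⊔ zpowers x) (hsa : s / a ∈ N ⊔ zpowers (y / a))
    (hsb : s / b ∈ N ⊔ zpowers (x / b)) : y / x ∈ N := by
  have hpow (g : G ⧸ N) : g ^ ℓ = 1 := by
    obtain ⟨g, rfl⟩ := QuotientGroup.mk_surjective g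
    exact (QuotientGroup.eq_one_iff _).2 (hN g)
  simp only [← mk_mem_zpowers_mk_iff, QuotientGroup.mk_div] at hab hy hsa hsb
  rw [← mk_mem_map_mk'_iff hS] at hx ha hb
  rw [← QuotientGroup.eq_one_iff] at haN ⊢
  rw [QuotientGroup.mk_div, div_eq_one]
  exact eq_of_div_mem_zpowers hpow hx ha hb haN hab hy hsa hsb

end PrimeExponent

section Hbold

open Subgroup

variable {K : Type*} [Field K]

lemma le_Hbold (T : Subgroup Kˣ) : T ≤ Hbold T := le_sInf fun _ h => h.1.1

variable {T : Subgroup Kˣ} {x y : Kˣ}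

lemma neg_mem_iff_of_neg_one_mem (hneg : -1 ∈ T) : -x ∈ T ↔ x ∈ T := by
  rw [← neg_one_mul, mul_mem_cancel_left hneg]

variable {ℓ : ℕ} [Fact ℓ.Prime]

lemma isRigid_iff (hT : ∀ g : Kˣ, g ^ ℓ ∈ T) :
    IsRigid T ↔ ∀ x y : Kˣ, x ∉ T → (x + y : K) = 1 → y ∈ T ⊔ zpowers x := by
  refine ⟨fun h x y hx hxy => ?_, fun h x hx h0 => ?_⟩
  · have hy : (1 : K) - x = y := by rw [← hxy, add_sub_cancel_left]
    have hcyc := (isCyclic_closure_mk_pair_iff hT hx).1 (h x hx (hy ▸ y.ne_zero))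
    simpa only [hy, Units.mk0_val] using hcyc
  · exact (isCyclic_closure_mk_pair_iff hT hx).2 (h x _ hx (by simp))

lemma mem_sup_zpowers_of_notMem_Hbold (hT : ∀ g : Kˣ, g ^ ℓ ∈ T) (hx : x ∉ Hbold T)
    (hxy : (x + y : K) = 1) : y ∈ T ⊔ zpowers x := by
  simp only [Hbold, mem_sInf, not_forall] at hx
  obtain ⟨H, ⟨⟨hTH, -⟩, hrigid⟩, hxH⟩ := hx
  by_contra hy
  obtain ⟨M, hM, hyM, hcyc⟩ := exists_le_notMem_isCyclic (fun g => mem_sup_left (hT g)) hy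
  have hTM : T ≤ M := le_sup_left.trans hM
  have hxM : zpowers x ≤ M := le_sup_right.trans hM
  have hmem := (isRigid_iff fun g => mem_inf.2 ⟨hTH (hT g), hTM (hT g)⟩).1 (hrigid M hTM hcyc) x y
    (fun h => hxH h.1) hxy
  exact hyM (sup_le inf_le_right hxM hmem)

lemma mem_Hbold_of_add_eq_one (hT : ∀ g : Kˣ, g ^ ℓ ∈ T) (hx : x ∈ Hbold T) (hxT : x ∉ T)
    (hxy : (x + y : K) = 1) : y ∈ Hbold T := by
  by_contra hy
  have hmem := mem_sup_zpowers_of_notMem_Hbold hT hy (by rwa [add_comm])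
  have hle : T ⊔ zpowers x ≤ Hbold T := sup_le (le_Hbold T) ((zpowers_le).2 hx)
  rw [sup_zpowers_eq_of_mem (hT y) hxT hmem] at hle
  exact hy (hle (mem_sup_right (mem_zpowers y)))

lemma exists_add_eq_one_of_ne_Hbold (hT : ∀ g : Kˣ, g ^ ℓ ∈ T) (hne : T ≠ Hbold T) :
    ∃ a b : Kˣ, (a + b : K) = 1 ∧ a ∈ Hbold T ∧ b ∈ Hbold T ∧ a ∉ T ∧ b ∉ T ⊔ zpowers a := by
  obtain ⟨h, hh, hhT⟩ := SetLike.exists_of_lt ((le_Hbold T).lt_of_ne hne)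
  obtain ⟨M, hTM, hhM, hcyc⟩ := exists_le_notMem_isCyclic hT hhT
  have hM : ¬ ∀ H, T ≤ H → IsCyclic (Kˣ ⧸ H) → IsRigid (M ⊓ H) := fun hM =>
    hhM ((sInf_le ⟨⟨hTM, hcyc⟩, hM⟩ : Hbold T ≤ M) hh)
  push Not at hM
  obtain ⟨H, hTH, -, hrigid⟩ := hM
  have hTMH : T ≤ M ⊓ H := le_inf hTM hTH
  rw [isRigid_iff fun g => hTMH (hT g)] at hrigid
  push Not at hrigid
  obtain ⟨a, b, ha, hab, hb⟩ := hrigid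
  have haT : a ∉ T := fun h => ha (hTMH h)
  have hbT : b ∉ T ⊔ zpowers a := fun h => hb (sup_le_sup_right hTMH _ h)
  have haH : a ∈ Hbold T := by
    by_contra h
    exact hbT (mem_sup_zpowers_of_notMem_Hbold hT h hab)
  exact ⟨a, b, hab, haH, mem_Hbold_of_add_eq_one hT haH haT hab, haT, hbT⟩

lemma div_mem_of_notMem_Hbold (hT : ∀ g : Kˣ, g ^ ℓ ∈ T) (hneg : -1 ∈ T)
    (hne : T ≠ Hbold T) (hx : x ∉ Hbold T) (hy : y ∉ Hbold T) (hxy : (x + y : K) = 1) :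
    y / x ∈ T := by
  obtain ⟨a, b, hab, ha, hb, haT, hbT⟩ := exists_add_eq_one_of_ne_Hbold hT hne
  -- Both `s = y - a` and `s = b - x` restrict the coset of `s`, and together they force `yT = xT`.
  have hs0 : (y - a : K) ≠ 0 := fun h => hy (by rwa [Units.ext (sub_eq_zero.1 h)])
  obtain ⟨s, hs⟩ : ∃ s : Kˣ, (s : K) = y - a := ⟨Units.mk0 _ hs0, rfl⟩
  have hyx : y ∈ T ⊔ zpowers x := mem_sup_zpowers_of_notMem_Hbold hT hx hxy
  have hsa : s / a ∈ T ⊔ zpowers (y / a) := by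
    rw [← neg_mem_iff_of_neg_one_mem (mem_sup_left hneg)]
    refine mem_sup_zpowers_of_notMem_Hbold hT (fun h => hy (by simpa using mul_mem h ha)) ?_
    push_cast
    rw [hs]
    field_simp
    ring
  have hsb : s / b ∈ T ⊔ zpowers (x / b) := by
    refine mem_sup_zpowers_of_notMem_Hbold hT (fun h => hx (by simpa using mul_mem h hb)) ?_
    push_cast
    rw [hs]
    field_simp
    linear_combination hxy - hab
  exact div_mem_of_div_mem_sup_zpowers hT (le_Hbold T) hx ha hb haT hbT hyx hsa hsb

lemma mem_or_div_mem_of_notMem_Hbold (hT : ∀ g : Kˣ, g ^ ℓ ∈ T) (hneg : -1 ∈ T)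
    (hne : T ≠ Hbold T) (hx : x ∉ Hbold T) (hxy : (x + y : K) = 1) : y ∈ T ∨ y / x ∈ T := by
  by_cases hyT : y ∈ T
  · exact .inl hyT
  refine .inr (div_mem_of_notMem_Hbold hT hneg hne hx (fun hy => hx ?_) hxy)
  exact mem_Hbold_of_add_eq_one hT hy hyT (by rwa [add_comm])

end Hbold

section Coset

variable {K : Type*} [Field K]

open Classical in
/-- The projection of `K` onto `Kˣ ⧸ T` with a zero adjoined. It turns a subgroup of `Kˣ` into the
kernel of a homomorphism of monoids with zero defined on all of `K`. -/
noncomputable def cosetHom (T : Subgroup Kˣ) : K →*₀ WithZero (Kˣ ⧸ T) :=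
  (WithZero.map' (QuotientGroup.mk' T)).comp
    (WithZero.withZeroUnitsEquiv (G := K)).symm.toMonoidWithZeroHom

variable {T : Subgroup Kˣ}

lemma cosetHom_coe_eq_one_iff {x : Kˣ} : cosetHom T x = 1 ↔ x ∈ T := by
  have hcoe : cosetHom T x = ((x : Kˣ ⧸ T) : WithZero (Kˣ ⧸ T)) :=
    congrArg (WithZero.map' (QuotientGroup.mk' T)) <| by
      classical exact WithZero.withZeroUnitsEquiv_symm_apply_coe x
  rw [hcoe, ← WithZero.coe_one, WithZero.coe_inj, QuotientGroup.eq_one_iff]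

lemma cosetHom_coe_eq_iff {x y : Kˣ} : cosetHom T y = cosetHom T x ↔ y / x ∈ T := by
  rw [← cosetHom_coe_eq_one_iff, Units.val_div_eq_div_val, map_div₀,
    div_eq_one_iff_eq ((map_ne_zero _).2 x.ne_zero)]

lemma cosetHom_eq_one_iff {a : K} : cosetHom T a = 1 ↔ ∃ t ∈ T, (t : K) = a := by
  refine ⟨fun h => ?_, ?_⟩
  · have ha : a ≠ 0 := by rintro rfl; exact WithZero.zero_ne_coe ((map_zero _).symm.trans h)
    lift a to Kˣ using ha.isUnit
    exact ⟨a, cosetHom_coe_eq_one_iff.1 h, rfl⟩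
  · rintro ⟨t, ht, rfl⟩
    exact cosetHom_coe_eq_one_iff.2 ht

end Coset

section Valuation

open Subgroup

variable {K : Type*} [Field K] {ℓ : ℕ} [Fact ℓ.Prime] {T : Subgroup Kˣ}

lemma cosetHom_one_add_of_ne_one (hT : ∀ g : Kˣ, g ^ ℓ ∈ T) (hneg : -1 ∈ T) (hne : T ≠ Hbold T)
    {x : K} (hx : cosetHom (Hbold T) x ≠ 1) :
    cosetHom T (1 + x) = 1 ∨ cosetHom T (1 + x) = cosetHom T x := by
  rcases eq_or_ne x 0 with rfl | hx0
  · simp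
  lift x to Kˣ using hx0.isUnit
  have hxH : -x ∉ Hbold T := by
    rwa [neg_mem_iff_of_neg_one_mem (le_Hbold T hneg), ← cosetHom_coe_eq_one_iff]
  have h0 : (1 + x : K) ≠ 0 := fun h0 => hxH <| by
    rw [show -x = 1 from Units.ext (by simpa using (eq_neg_of_add_eq_zero_left h0).symm)]
    exact one_mem _
  obtain ⟨y, hy⟩ := h0.isUnit
  have hxy : ((-x : Kˣ) + y : K) = 1 := by rw [hy]; simp
  rw [← hy, cosetHom_coe_eq_one_iff, cosetHom_coe_eq_iff,
    ← neg_mem_iff_of_neg_one_mem (x := y / x) hneg, ← div_neg]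
  exact mem_or_div_mem_of_notMem_Hbold hT hneg hne hxH hxy

lemma cosetHom_Hbold_one_add_eq_one (hT : ∀ g : Kˣ, g ^ ℓ ∈ T) (hneg : -1 ∈ T) {h : K}
    (hh : cosetHom (Hbold T) h = 1) (hhT : cosetHom T h ≠ 1) :
    cosetHom (Hbold T) (1 + h) = 1 := by
  obtain ⟨h, hhH, rfl⟩ := cosetHom_eq_one_iff.1 hh
  rw [Ne, cosetHom_coe_eq_one_iff, ← neg_mem_iff_of_neg_one_mem hneg] at hhT
  rw [← neg_mem_iff_of_neg_one_mem (le_Hbold T hneg)] at hhH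
  have h0 : (1 + h : K) ≠ 0 := fun h0 => hhT <| by
    rw [show -h = 1 from Units.ext (by simpa using (eq_neg_of_add_eq_zero_left h0).symm)]
    exact one_mem _
  obtain ⟨y, hy⟩ := h0.isUnit
  rw [← hy, cosetHom_coe_eq_one_iff]
  exact mem_Hbold_of_add_eq_one hT hhH hhT (by rw [hy]; simp)

lemma exists_cosetHom_ne (hT : ∀ g : Kˣ, g ^ ℓ ∈ T) (hneg : -1 ∈ T) (hne : T ≠ Hbold T) :
    ∃ w : K, cosetHom (Hbold T) w = 1 ∧ cosetHom T w ≠ 1 ∧ cosetHom T (1 + w) ≠ 1 ∧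
      cosetHom T (1 + w) ≠ cosetHom T w := by
  obtain ⟨a, b, hab, haH, -, haT, hbT⟩ := exists_add_eq_one_of_ne_Hbold hT hne
  have hb : 1 + ((-a : Kˣ) : K) = b := by push_cast; linear_combination -hab
  refine ⟨(-a : Kˣ), ?_, ?_, ?_, ?_⟩
  · rwa [cosetHom_coe_eq_one_iff, neg_mem_iff_of_neg_one_mem (le_Hbold T hneg)]
  · rwa [Ne, cosetHom_coe_eq_one_iff, neg_mem_iff_of_neg_one_mem hneg]
  · rw [hb, Ne, cosetHom_coe_eq_one_iff]
    exact fun h => hbT (mem_sup_left h)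
  · rw [hb, Ne, cosetHom_coe_eq_iff, div_neg, neg_mem_iff_of_neg_one_mem hneg]
    exact fun h => hbT (by simpa using mul_mem_sup h (mem_zpowers a))

lemma isNonexceptionalRigidPair_cosetHom (hT : ∀ g : Kˣ, g ^ ℓ ∈ T) (hneg : -1 ∈ T)
    (hne : T ≠ Hbold T) : IsNonexceptionalRigidPair (Γ := WithZero (Kˣ ⧸ T))
      (Δ := WithZero (Kˣ ⧸ Hbold T)) (cosetHom T) (cosetHom (Hbold T)) where
  map_eq_one h := by
    obtain ⟨t, ht, rfl⟩ := cosetHom_eq_one_iff.1 h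
    exact cosetHom_coe_eq_one_iff.2 (le_Hbold T ht)
  map_neg_one := cosetHom_eq_one_iff.2 ⟨-1, hneg, rfl⟩
  map_one_add := cosetHom_one_add_of_ne_one hT hneg hne
  map_one_add_eq_one := cosetHom_Hbold_one_add_eq_one hT hneg
  exists_map_ne := exists_cosetHom_ne hT hneg hne

lemma mem_sup_zpowers_of_principalUnitGroup_le {O : ValuationSubring K}
    (hO : O.principalUnitGroup ≤ T) (hneg : -1 ∈ T) {x y : Kˣ}
    (hx : O.valuation x ≠ 1) (hxy : (x + y : K) = 1) : y ∈ T ⊔ zpowers x := by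
  rcases hx.lt_or_gt with hlt | hgt
  · refine mem_sup_left (hO ?_)
    rwa [O.mem_principalUnitGroup_iff, ← hxy, sub_add_cancel_right, Valuation.map_neg]
  · have hyx : -(y / x) ∈ T := hO <| by
      have hinv : ((-(y / x) : Kˣ) : K) - 1 = -(x : K)⁻¹ := by
        push_cast
        field_simp
        linear_combination -hxy
      rw [O.mem_principalUnitGroup_iff, hinv, Valuation.map_neg, map_inv₀]
      exact inv_lt_one_of_one_lt₀ hgt
    rw [neg_mem_iff_of_neg_one_mem hneg] at hyx
    simpa using mul_mem_sup hyx (mem_zpowers x)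

lemma isRigid_inf {O : ValuationSubring K} {M H : Subgroup Kˣ} [IsCyclic (Kˣ ⧸ H)]
    (hN : ∀ g : Kˣ, g ^ ℓ ∈ M ⊓ H) (hneg : -1 ∈ M ⊓ H) (hO : O.principalUnitGroup ≤ M ⊓ H)
    (hM : O.unitGroup ≤ M) : IsRigid (M ⊓ H) := by
  rw [isRigid_iff hN]
  intro x y hx hxy
  by_cases hvx : O.valuation (x : K) = 1
  swap
  · exact mem_sup_zpowers_of_principalUnitGroup_le hO hneg hvx hxy
  have hxM : x ∈ M := hM (O.mem_unitGroup_iff x |>.2 hvx)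
  have hvy : O.valuation (y : K) = 1 := by
    refine le_antisymm ?_ (not_lt.1 fun hlt => hx (hO ?_))
    · rw [← sub_eq_iff_eq_add'.2 hxy.symm]
      exact (Valuation.map_sub _ _ _).trans (by simp [hvx])
    · rwa [O.mem_principalUnitGroup_iff, ← hxy, sub_add_cancel_left, Valuation.map_neg]
  have hxH : x ∉ H := fun h => hx ⟨hxM, h⟩
  rw [inf_sup_assoc_of_le H ((zpowers_le).2 hxM), sup_zpowers_eq_top (fun g => (hN g).2) hxH,
    inf_top_eq]
  exact hM (O.mem_unitGroup_iff y |>.2 hvy)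

lemma sup_unitGroup_eq_Hbold (hT : ∀ g : Kˣ, g ^ ℓ ∈ T) (hneg : -1 ∈ T)
    {O : ValuationSubring K} (hO : O.principalUnitGroup ≤ T) (hOH : O.unitGroup ≤ Hbold T) :
    T ⊔ O.unitGroup = Hbold T := by
  refine le_antisymm (sup_le (le_Hbold T) hOH) fun h hh => ?_
  by_contra hhO
  obtain ⟨M, hM, hhM, hcyc⟩ := exists_le_notMem_isCyclic (fun g => mem_sup_left (hT g)) hhO
  have hTM : T ≤ M := le_sup_left.trans hM
  refine hhM ((sInf_le ⟨⟨hTM, hcyc⟩, fun H hTH _ => ?_⟩ : Hbold T ≤ M) hh)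
  have hTMH : T ≤ M ⊓ H := le_inf hTM hTH
  exact isRigid_inf (fun g => hTMH (hT g)) (hTMH hneg) (hO.trans hTMH) (le_sup_right.trans hM)

theorem exists_coarsest_valuationSubring_of_ne_Hbold (hT : ∀ g : Kˣ, g ^ ℓ ∈ T) (hneg : -1 ∈ T)
    (hne : T ≠ Hbold T) : ∃ O : ValuationSubring K, O.unitGroup ≤ Hbold T ∧
      (∀ O' : ValuationSubring K, O'.unitGroup ≤ Hbold T → O' ≤ O) ∧
      O.principalUnitGroup ≤ T ∧ T ⊔ O.unitGroup = Hbold T := by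
  have c := isNonexceptionalRigidPair_cosetHom hT hneg hne
  have hunit : c.valuationSubring.unitGroup ≤ Hbold T := fun x hx =>
    cosetHom_coe_eq_one_iff.1 (c.map_eq_one_of_valuation_eq_one hx)
  have hprincipal : c.valuationSubring.principalUnitGroup ≤ T := fun x hx => by
    have h1 := c.map_one_add_of_valuation_lt_one hx
    rwa [add_sub_cancel, cosetHom_coe_eq_one_iff] at h1
  refine ⟨_, hunit, fun O' hO' => c.le_valuationSubring fun a ha => ?_, hprincipal,
    sup_unitGroup_eq_Hbold hT hneg hprincipal hunit⟩
  have ha0 : a ≠ 0 := by rintro rfl; simp at ha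
  lift a to Kˣ using ha0.isUnit
  exact cosetHom_coe_eq_one_iff.2 (hO' ha)

end Valuation

section ResidueCharacteristic

open Subgroup

variable {K L : Type*} [Field K] [Field L] {ℓ : ℕ} {O : ValuationSubring K}
  {W : ValuationSubring L}

lemma exists_mem_principalUnitGroup_eq_one_add {a : K} (ha : O.valuation a < 1) :
    ∃ u ∈ O.principalUnitGroup, (u : K) = 1 + a := by
  have h0 : 1 + a ≠ 0 := fun h => by simpa [h] using O.valuation.map_one_add_of_lt ha
  exact ⟨Units.mk0 _ h0, by simpa [O.mem_principalUnitGroup_iff] using ha, rfl⟩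

lemma exists_eq_pow_add_of_pow_eq_one_add (hℓ : ℓ.Prime) (hWℓ : W.valuation (ℓ : L) < 1) {a c : L}
    (hc : W.valuation c < 1) (ha : a ^ ℓ = 1 + c) :
    ∃ b r, W.valuation b < 1 ∧ W.valuation r ≤ 1 ∧ c = b ^ ℓ + ℓ * b * r := by
  have hva : W.valuation a ≤ 1 := by
    rw [← pow_le_one_iff hℓ.ne_zero, ← map_pow, ha, W.valuation.map_one_add_of_lt hc]
  have hb : a - 1 ∈ W := sub_mem ((W.valuation_le_one_iff a).1 hva) (one_mem W)
  obtain ⟨r, hr⟩ := exists_add_pow_prime_eq hℓ (⟨a - 1, hb⟩ : W) 1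
  have hr := congrArg Subtype.val hr
  push_cast at hr
  rw [sub_add_cancel, ha] at hr
  have hcb : c = (a - 1) ^ ℓ + ℓ * (a - 1) * r := by linear_combination hr
  refine ⟨a - 1, r, ?_, W.valuation_le_one r, hcb⟩
  rw [← pow_lt_one_iff hℓ.ne_zero, ← map_pow, ← sub_eq_iff_eq_add.2 hcb]
  refine Valuation.map_sub_lt _ hc ?_
  rw [map_mul, map_mul, mul_assoc]
  exact mul_lt_one_of_lt_of_le hWℓ
    (mul_le_one' ((W.valuation_le_one_iff _).2 hb) (W.valuation_le_one r))

lemma mul_mem_of_pow_eq_one_add (hℓ : ℓ.Prime) {T : Subgroup Lˣ} (hT : ∀ x : Lˣ, x ^ ℓ ∈ T)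
    (hW : W.principalUnitGroup ≤ T) {p s : Lˣ} {a : L} (hp : (p : L) = ℓ)
    (hs : 1 ≤ W.valuation (s : L)) (hps : W.valuation (p * s : L) < 1)
    (ha : a ^ ℓ = 1 + p * s) : p * s ∈ T := by
  have hWℓ : W.valuation (ℓ : L) < 1 := by
    rw [← hp]
    exact (le_mul_of_one_le_right' hs).trans_lt ((map_mul _ _ _).symm.trans_lt hps)
  obtain ⟨b, r, hb, hr, hbr⟩ := exists_eq_pow_add_of_pow_eq_one_add hℓ hWℓ hps ha
  have hquot : W.valuation (-(b * r / s)) < 1 := by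
    rw [Valuation.map_neg, map_div₀, map_mul]
    exact (div_lt_one₀ (zero_lt_one.trans_le hs)).2
      ((mul_lt_one_of_lt_of_le hb hr).trans_le hs)
  obtain ⟨t, htW, ht⟩ := exists_mem_principalUnitGroup_eq_one_add hquot
  have hpst : ((p * s * t : Lˣ) : L) = b ^ ℓ := by
    push_cast
    rw [ht]
    field_simp
    linear_combination hbr - b * r * hp
  have hb0 : b ≠ 0 := by
    rintro rfl
    exact (p * s * t).ne_zero (by rw [hpst, zero_pow hℓ.ne_zero])
  lift b to Lˣ using hb0.isUnit
  rw [← mul_mem_cancel_right (hW htW), show p * s * t = b ^ ℓ from Units.ext (by simpa using hpst)]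
  exact hT b

lemma valuation_map_lt_one {f : K →+* L} (h : W.comap f ≤ O) {y : K} (hy : O.valuation y < 1) :
    W.valuation (f y) < 1 := by
  have hmem := ValuationSubring.nonunits_le_nonunits.2 h hy
  rw [ValuationSubring.mem_nonunits_iff_or, ValuationSubring.mem_comap, map_inv₀] at hmem
  rw [← ValuationSubring.mem_nonunits_iff, ValuationSubring.mem_nonunits_iff_or]
  exact hmem.imp_left fun h0 => by rw [h0, map_zero]

lemma mem_unitGroup_iff_mem_and_inv_mem {x : Kˣ} :
    x ∈ O.unitGroup ↔ (x : K) ∈ O ∧ (x : K)⁻¹ ∈ O := by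
  rw [O.mem_unitGroup_iff, ← O.valuation_le_one_iff, ← O.valuation_le_one_iff, map_inv₀,
    inv_le_one₀ (zero_lt_iff.2 (by simp)), le_antisymm_iff]

lemma unitGroup_comap (f : K →+* L) :
    (W.comap f).unitGroup = W.unitGroup.comap (Units.map f) := by
  ext x
  simp [mem_unitGroup_iff_mem_and_inv_mem, -ValuationSubring.mem_unitGroup_iff]

lemma valuation_natCast_lt_one_of_ringChar_eq (h : ringChar (IsLocalRing.ResidueField O) = ℓ) :
    O.valuation (ℓ : K) < 1 := by
  have hres : IsLocalRing.residue O ℓ = 0 := by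
    rw [map_natCast, ← h, ringChar.Nat.cast_ringChar]
  rw [IsLocalRing.residue_eq_zero_iff, O.valuation_lt_one_iff] at hres
  simpa using hres

lemma unitGroup_le_comap_of_valuation_natCast_lt_one (hℓ : ℓ.Prime) {f : K →+* L}
    {T : Subgroup Lˣ} (hT : ∀ x : Lˣ, x ^ ℓ ∈ T) (hW : W.principalUnitGroup ≤ T)
    (hWO : W.comap f ≤ O) (hroot : ∀ u ∈ O.principalUnitGroup, ∃ a : L, a ^ ℓ = f u)
    (hℓ0 : (ℓ : K) ≠ 0) (hOℓ : O.valuation (ℓ : K) < 1) :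
    O.unitGroup ≤ T.comap (Units.map f) := by
  obtain ⟨p, hp⟩ := hℓ0.isUnit
  have hmul : ∀ s ∈ O.unitGroup, 1 ≤ W.valuation (f s) → p * s ∈ T.comap (Units.map f) := by
    intro s hs hWs
    have hps : O.valuation (p * s : K) < 1 := by
      rwa [map_mul, (O.mem_unitGroup_iff s).1 hs, mul_one, hp]
    obtain ⟨u, huO, hu⟩ := exists_mem_principalUnitGroup_eq_one_add hps
    obtain ⟨a, ha⟩ := hroot u huO
    rw [mem_comap, map_mul]
    refine mul_mem_of_pow_eq_one_add (a := a) hℓ hT hW (by simp [hp]) hWs ?_ ?_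
    · simpa using valuation_map_lt_one hWO hps
    · simpa [hu] using ha
  have hpT : p ∈ T.comap (Units.map f) := by simpa using hmul 1 (one_mem _) (by simp)
  have hmem : ∀ s ∈ O.unitGroup, 1 ≤ W.valuation (f s) → s ∈ T.comap (Units.map f) :=
    fun s hs hWs => (mul_mem_cancel_left hpT).1 (hmul s hs hWs)
  intro s hs
  rcases le_total 1 (W.valuation (f s)) with hWs | hWs
  · exact hmem s hs hWs
  · refine inv_mem_iff.1 (hmem s⁻¹ (inv_mem hs) ?_)
    rw [Units.val_inv_eq_inv_val, map_inv₀, map_inv₀]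
    exact (one_le_inv₀ (zero_lt_iff.2 (by simp))).2 hWs

end ResidueCharacteristic

theorem stmt_9_general {K L : Type*} [Field K] [Field L] [Algebra K L] {ℓ : ℕ} (hℓ : ℓ.Prime)
    (hchar : ringChar K ≠ ℓ) {T : Subgroup Kˣ} (hneg : -1 ∈ T) (hHT : T ≠ Hbold T)
    (hroot : ∀ t ∈ T, ∃ α : L, α ^ ℓ = algebraMap K L t)
    {T' : Subgroup Lˣ} (hpow' : ∀ x : Lˣ, x ^ ℓ ∈ T')
    (hT' : T = T'.comap (Units.map (algebraMap K L).toMonoidHom))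
    (hH' : Hbold T = (Hbold T').comap (Units.map (algebraMap K L).toMonoidHom)) :
    ∃ O : ValuationSubring K, O.unitGroup ≤ Hbold T ∧
      (∀ O' : ValuationSubring K, O'.unitGroup ≤ Hbold T → O' ≤ O) ∧
      (∀ a : K, O.valuation a < 1 → ∃ t ∈ T, ((t : Kˣ) : K) = 1 + a) ∧
      T ⊔ O.unitGroup = Hbold T ∧
      ringChar (IsLocalRing.ResidueField O) ≠ ℓ := by
  have := Fact.mk hℓ
  have hpow : ∀ x : Kˣ, x ^ ℓ ∈ T := fun x => by
    rw [hT', Subgroup.mem_comap, map_pow]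
    exact hpow' _
  have hneg' : -1 ∈ T' := by
    rw [hT', Subgroup.mem_comap] at hneg
    convert hneg
    ext
    simp
  have hHT' : T' ≠ Hbold T' := fun h => hHT (by rw [hH', ← h, ← hT'])
  obtain ⟨O, hOH, hmax, hO, hTO⟩ := exists_coarsest_valuationSubring_of_ne_Hbold hpow hneg hHT
  obtain ⟨W, hWH, -, hW, -⟩ := exists_coarsest_valuationSubring_of_ne_Hbold hpow' hneg' hHT'
  have hWO : W.comap (algebraMap K L) ≤ O := hmax _ fun x hx => by
    rw [hH']
    exact hWH ((unitGroup_comap (algebraMap K L)).le hx)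
  refine ⟨O, hOH, hmax, fun a ha => ?_, hTO, fun hres => hHT ?_⟩
  · obtain ⟨u, hu, hua⟩ := exists_mem_principalUnitGroup_eq_one_add ha
    exact ⟨u, hO hu, hua⟩
  rw [← hTO, left_eq_sup, hT']
  exact unitGroup_le_comap_of_valuation_natCast_lt_one hℓ hpow' hW hWO
    (fun u hu => hroot u (hO hu)) (fun h => hchar (CharP.ringChar_of_prime_eq_zero hℓ h))
    (valuation_natCast_lt_one_of_ringChar_eq hres)

lemma exists_pow_eq_algebraMap_Lfield {K : Type*} [Field K] (Ω : Type*) [Field Ω] [Algebra K Ω]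
    [IsSepClosure K Ω] {ℓ : ℕ} (hℓ : (ℓ : K) ≠ 0) {T : Subgroup Kˣ} {t : Kˣ} (ht : t ∈ T) :
    ∃ α : Lfield Ω ℓ T, α ^ ℓ = algebraMap K (Lfield Ω ℓ T) t := by
  have : IsSepClosed Ω := IsSepClosure.sep_closed K
  have : NeZero (ℓ : Ω) := ⟨by simpa using (map_ne_zero (algebraMap K Ω)).2 hℓ⟩
  obtain ⟨α, hα⟩ := IsSepClosed.exists_pow_nat_eq (algebraMap K Ω t) ℓ
  exact ⟨⟨α, IntermediateField.subset_adjoin _ _ ⟨t, ht, hα.symm⟩⟩, Subtype.ext hα⟩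

/-- with `char K ≠ ℓ`, `μ_ℓ ⊆ K`, `K^{×ℓ} ⊆ T`, `-1 ∈ T`, `T ≠ 𝐇(T)` and
`H := 𝐇(T)`; if there is `T' ≤ L^×` (where `L = K(√[ℓ]{T})` inside a separable closure)
with `L^{×ℓ} ⊆ T'`, `T = K^× ∩ T'` and `H = K^× ∩ 𝐇(T')`, then `H` is valuative and,
for `v = v_H` the coarsest valuation with `O_v^× ⊆ H`, one has `1 + m_v ⊆ T`,
`T · O_v^× = H`, and `char k(v) ≠ ℓ`. -/
theorem stmt_9 {K : Type*} [Field K] (Ω : Type*) [Field Ω] [Algebra K Ω] [IsSepClosure K Ω]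
    (ℓ : ℕ) (hℓ : ℓ.Prime) (hchar : ringChar K ≠ ℓ) (hζ : ∃ ζ : K, IsPrimitiveRoot ζ ℓ)
    (T : Subgroup Kˣ) (hpow : ∀ x : Kˣ, x ^ ℓ ∈ T) (hneg : (-1 : Kˣ) ∈ T)
    (hHT : T ≠ Hbold T)
    (T' : Subgroup (↥(Lfield Ω ℓ T))ˣ)
    (hpow' : ∀ x : (↥(Lfield Ω ℓ T))ˣ, x ^ ℓ ∈ T')
    (hT' : T = T'.comap (unitsToL Ω ℓ T))
    (hH' : Hbold T = (Hbold T').comap (unitsToL Ω ℓ T)) :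
    ∃ O : ValuationSubring K, O.unitGroup ≤ Hbold T ∧
      (∀ O' : ValuationSubring K, O'.unitGroup ≤ Hbold T → O' ≤ O) ∧
      (∀ a : K, O.valuation a < 1 → ∃ t ∈ T, ((t : Kˣ) : K) = 1 + a) ∧
      T ⊔ O.unitGroup = Hbold T ∧
      ringChar (IsLocalRing.ResidueField ↥O) ≠ ℓ := by
  have hℓ0 : (ℓ : K) ≠ 0 := fun h => hchar (CharP.ringChar_of_prime_eq_zero hℓ h)
  exact stmt_9_general hℓ hchar hneg hHT (fun _ => exists_pow_eq_algebraMap_Lfield Ω hℓ0)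
    hpow' hT' hH'
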